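/- Let m ≥ 1 be an integer and set w = m − n/2. Let U ⊆ ℝ^{n+2} ∖ {0} be an open cone and let f̃₀ be a smooth function on U with Xf̃₀ = w f̃₀ on U. Then there exist smooth functions s̃ and l̃ on U with X s̃ = w s̃ and X l̃ = (w − 2m) l̃ on U, such that s̃(y) = f̃₀(y) for every y ∈ N ∩ U, Δ̃l̃ vanishes to infinite order at every point of N ∩ U, and Δ̃s̃ + 4m Q^{m−1} l̃ vanishes to infinite order at every point of N ∩ U. (These conditions express that f̃ = s̃ + l̃ Q^m log|Q| is a harmonic extension of f̃₀ to infinite order along the null cone in the obstructed case.) -/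

import Mathlib

/-!
The extension is built as a formal power series in `Q`, which is then realized by smooth functions.

If `g` is homogeneous of degree `d`, then
`Δ̃(Q^k g) = Q^k Δ̃g + 2k(2d + n + 2k) Q^(k-1) g` (`laplt_QForm_pow_mul`). The functions
`g_k = Δ̃^k f̃₀` are homogeneous of degree `w - 2k`, so for the ansatz
`s̃ ~ ∑ a_k Q^k g_k` and `l̃ ~ ∑ b_k Q^k g_{m+k}` the two equations reduce to scalar recurrences:
`b_k - 4(k+1)(m+k+1) b_{k+1} = 0` and
`a_k + 4(k+1)(m-k-1) a_{k+1} + 4m b_{k+1-m} = 0`, where the last term is present only if `m ≤ k+1`,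
with `a_0 = 1`. The only index at which a leading coefficient degenerates is `k = m - 1`; there the
second equation has to be solved for `b_0` instead of `a_m`, which is why the log term is needed
(`exists_coefficients`).

A formal series `∑ Q^k f_k` is realized by a smooth function by Borel's summation: the `k`-th term
is multiplied by a cutoff `χ(Q / ε_k)`, with `ε_k` decreasing so fast that the tails converge in
every `C^i` norm on compact sets (`exists_borel`). If `f_k` has degree `d - 2k`, replacing `F` by
`x ↦ |x|^d F(x / |x|)` makes the sum homogeneous of degree `d` and keeps its expansion
(`exists_homog_borel`).

Near a point of the null cone the error is then, for each `K`, of the form `Q^K` times a smooth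
function. Differentiating such a function costs one power of `Q` (`InQIdeal.fderiv`), so the error
vanishes to infinite order on the null cone (`InQIdeal.iteratedFDeriv_eq_zero`).
-/

open Matrix

noncomputable section

abbrev Idx (p q : ℕ) : Type := Unit ⊕ (Fin (p + q)) ⊕ Unit

/-- The diagonal quadratic form of signature `(p,q)` on `ℝ^n`, `n = p + q`. -/
def hMat (p q : ℕ) : Matrix (Fin (p + q)) (Fin (p + q)) ℝ :=
  Matrix.diagonal fun i => if (i : ℕ) < p then (1 : ℝ) else -1

/-- The quadratic form of signature `(p+1,q+1)` on `ℝ^{n+2}`, in block form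
`[[0,0,1],[0,h,0],[1,0,0]]`. -/
def htMat (p q : ℕ) : Matrix (Idx p q) (Idx p q) ℝ :=
  Matrix.of fun I J =>
    match I, J with
    | Sum.inl _, Sum.inr (Sum.inr _) => (1 : ℝ)
    | Sum.inr (Sum.inr _), Sum.inl _ => 1
    | Sum.inr (Sum.inl i), Sum.inr (Sum.inl j) => hMat p q i j
    | _, _ => 0

/-- `Q(x) = Σ h̃_{IJ} x^I x^J`. -/
def QForm (p q : ℕ) (x : Idx p q → ℝ) : ℝ := ∑ I, ∑ J, htMat p q I J * x I * x J

/-- The partial derivative `∂_I f`. -/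
def pderiv (p q : ℕ) (I : Idx p q) (f : (Idx p q → ℝ) → ℝ) : (Idx p q → ℝ) → ℝ :=
  fun x => fderiv ℝ f x (Pi.single I 1)

/-- The ambient Laplacian `Δ̃f = Σ h̃^{IJ} ∂_I ∂_J f`. -/
def laplt (p q : ℕ) (f : (Idx p q → ℝ) → ℝ) : (Idx p q → ℝ) → ℝ :=
  fun x => ∑ I, ∑ J, (htMat p q)⁻¹ I J * pderiv p q I (pderiv p q J f) x

/-- The Euler operator `Xf = Σ x^I ∂_I f`. -/
def euler (p q : ℕ) (f : (Idx p q → ℝ) → ℝ) : (Idx p q → ℝ) → ℝ :=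
  fun x => ∑ I, x I * pderiv p q I f x

/-- The null cone `N = {x ≠ 0 : Q(x) = 0}` of `h̃`. -/
def nullCone (p q : ℕ) : Set (Idx p q → ℝ) := {x | x ≠ 0 ∧ QForm p q x = 0}

/-- A function vanishes to infinite order at `y` if its value and all iterated
derivatives of every order vanish at `y`. -/
def VanishesToInfOrderAt (p q : ℕ) (f : (Idx p q → ℝ) → ℝ) (y : Idx p q → ℝ) : Prop :=
  ∀ k : ℕ, iteratedFDeriv ℝ k f y = 0

/-- An open cone in `ℝ^{n+2} ∖ {0}`. -/
def IsOpenCone (p q : ℕ) (U : Set (Idx p q → ℝ)) : Prop :=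
  IsOpen U ∧ (∀ x ∈ U, x ≠ 0) ∧ ∀ x ∈ U, ∀ l : ℝ, 0 < l → l • x ∈ U

/-- The constant `c_m` with `c_m⁻¹ = (-4)^{m-1} ((m-1)!)²`. -/
def cConst (m : ℕ) : ℝ := ((-4 : ℝ) ^ (m - 1) * ((m - 1).factorial : ℝ) ^ 2)⁻¹


open Filter Topology

/-! ### Borel summation of series in powers of a smooth function -/

/-- Each derivative applied to `ψ(Q / ε) g` costs at most one factor `ε⁻¹`. The induction replaces
`(ψ, g)` by `(ψ, Dg)` and `(ψ', DQ ⊗ g)`, hence the quantification over the target of `g`. -/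
theorem norm_iteratedFDeriv_scaled_le {E : Type} [NormedAddCommGroup E] [NormedSpace ℝ E]
    {Q : E → ℝ} (hQ : ContDiff ℝ (⊤ : ℕ∞) Q) (i : ℕ) :
    ∀ {F : Type} [NormedAddCommGroup F] [NormedSpace ℝ F] {g : E → F} {ψ : ℝ → ℝ},
      ContDiff ℝ (⊤ : ℕ∞) g → HasCompactSupport g →
      ContDiff ℝ (⊤ : ℕ∞) ψ → HasCompactSupport ψ →
      ∃ C : ℝ, ∀ ε : ℝ, 0 < ε → ε ≤ 1 → ∀ x,
        ‖iteratedFDeriv ℝ i (fun x => ψ (Q x / ε) • g x) x‖ ≤ C * ε⁻¹ ^ i := by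
  induction i with
  | zero =>
    intro F _ _ g ψ hg hgc hψ hψc
    obtain ⟨A, hA⟩ := hgc.exists_bound_of_continuous hg.continuous
    obtain ⟨B, hB⟩ := hψc.exists_bound_of_continuous hψ.continuous
    refine ⟨B * A, fun ε _ _ x => ?_⟩
    rw [norm_iteratedFDeriv_zero, norm_smul, pow_zero, mul_one]
    exact mul_le_mul (hB _) (hA _) (norm_nonneg _) ((norm_nonneg _).trans (hB 0))
  | succ i ih =>
    intro F _ _ g ψ hg hgc hψ hψc
    have hQ' : ContDiff ℝ (⊤ : ℕ∞) (fderiv ℝ Q) := hQ.fderiv_right (by simp)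
    have hg' : ContDiff ℝ (⊤ : ℕ∞) (fderiv ℝ g) := hg.fderiv_right (by simp)
    have hψ' : ContDiff ℝ (⊤ : ℕ∞) (deriv ψ) := by
      have := (contDiff_infty_iff_deriv (𝕜 := ℝ) (f := ψ)).1 hψ
      exact this.2
    have hk : ContDiff ℝ (⊤ : ℕ∞) (fun x => (fderiv ℝ Q x).smulRight (g x)) :=
      hQ'.smulRight hg
    have hkc : HasCompactSupport (fun x => (fderiv ℝ Q x).smulRight (g x)) :=
      hgc.mono fun x hx => by
        intro h0
        apply hx
        ext v
        simp [h0]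
    obtain ⟨A, hA⟩ := ih hg' (hgc.fderiv ℝ) hψ hψc
    obtain ⟨B, hB⟩ := ih hk hkc hψ' hψc.deriv
    refine ⟨|A| + B, fun ε hε hε1 x => ?_⟩
    have hin : ContDiff ℝ (⊤ : ℕ∞) (fun x => Q x / ε) := hQ.div_const ε
    have h1 : ContDiff ℝ (⊤ : ℕ∞) (fun x => ψ (Q x / ε) • fderiv ℝ g x) :=
      (hψ.comp hin).smul hg'
    have h2 : ContDiff ℝ (⊤ : ℕ∞)
        (fun x => deriv ψ (Q x / ε) • (fderiv ℝ Q x).smulRight (g x)) :=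
      (hψ'.comp hin).smul hk
    have hD : fderiv ℝ (fun x => ψ (Q x / ε) • g x) =
        (fun x => ψ (Q x / ε) • fderiv ℝ g x) +
        ε⁻¹ • (fun x => deriv ψ (Q x / ε) • (fderiv ℝ Q x).smulRight (g x)) := by
      funext x
      have hq : HasFDerivAt (fun x => Q x / ε) (ε⁻¹ • fderiv ℝ Q x) x := by
        have := ((hQ.differentiable (by simp)) x).hasFDerivAt.const_mul ε⁻¹
        simpa [div_eq_inv_mul] using this
      have hp : HasFDerivAt (fun x => ψ (Q x / ε)) (deriv ψ (Q x / ε) • ε⁻¹ • fderiv ℝ Q x) x :=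
        ((hψ.differentiable (by simp)) _).hasDerivAt.comp_hasFDerivAt x hq
      have := hp.smul ((hg.differentiable (by simp)) x).hasFDerivAt
      refine (HasFDerivAt.fderiv this).trans ?_
      ext v
      simp only [_root_.add_apply, _root_.smul_apply,
        ContinuousLinearMap.smulRight_apply, Pi.add_apply, Pi.smul_apply, smul_smul, smul_eq_mul]
      ring_nf
    have h3 : ContDiffAt ℝ i
        (ε⁻¹ • fun x => deriv ψ (Q x / ε) • (fderiv ℝ Q x).smulRight (g x)) x :=
      (h2.of_le (by exact_mod_cast le_top)).contDiffAt.const_smul ε⁻¹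
    rw [← norm_iteratedFDeriv_fderiv, hD,
      iteratedFDeriv_add_apply (h1.of_le (by exact_mod_cast le_top)).contDiffAt
        h3,
      iteratedFDeriv_const_smul_apply (h2.of_le (by exact_mod_cast le_top)).contDiffAt]
    refine (norm_add_le _ _).trans ?_
    rw [norm_smul, Real.norm_of_nonneg (inv_nonneg.2 hε.le)]
    have e1 : (1 : ℝ) ≤ ε⁻¹ := (one_le_inv₀ hε).2 hε1
    have hA' := hA ε hε hε1 x
    have hB' := hB ε hε hε1 x
    have hp : 0 < ε⁻¹ ^ i := by positivity
    calc _ ≤ A * ε⁻¹ ^ i + ε⁻¹ * (B * ε⁻¹ ^ i) := by gcongr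
      _ ≤ |A| * (ε⁻¹ ^ i * ε⁻¹) + ε⁻¹ * (B * ε⁻¹ ^ i) := by
          gcongr
          · exact le_abs_self A
          · nlinarith
      _ = _ := by rw [pow_succ]; ring

/-- The term `Q^a χ(Q / ε) g` equals `ε^a ψ(Q / ε) g` with `ψ(t) = t^a χ(t)`, so its derivatives of
order `i < a` are `O(ε^(a - i))`. -/
theorem exists_cutoff_scale {E : Type} [NormedAddCommGroup E] [NormedSpace ℝ E]
    {Q : E → ℝ} (hQ : ContDiff ℝ (⊤ : ℕ∞) Q) {χ : ℝ → ℝ} (hχ : ContDiff ℝ (⊤ : ℕ∞) χ)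
    (hχc : HasCompactSupport χ) {g : E → ℝ} (hg : ContDiff ℝ (⊤ : ℕ∞) g)
    (hgc : HasCompactSupport g) {i a : ℕ} (hia : i < a) {η : ℝ} (hη : 0 < η) :
    ∀ᶠ ε in 𝓝[>] (0 : ℝ), ∀ x,
      ‖iteratedFDeriv ℝ i (fun x => Q x ^ a * χ (Q x / ε) * g x) x‖ ≤ η := by
  obtain ⟨C, hC⟩ := norm_iteratedFDeriv_scaled_le hQ i (ψ := fun t => t ^ a * χ t) hg hgc
    ((contDiff_id.pow a).mul hχ) hχc.mul_left
  have hlim : Tendsto (fun ε : ℝ => |C| * ε) (𝓝[>] 0) (𝓝 0) := by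
    have : Tendsto (fun ε : ℝ => |C| * ε) (𝓝 0) (𝓝 (|C| * 0)) :=
      (continuous_const.mul continuous_id).tendsto 0
    rw [mul_zero] at this
    exact this.mono_left nhdsWithin_le_nhds
  filter_upwards [hlim.eventually (gt_mem_nhds hη), self_mem_nhdsWithin,
    mem_nhdsWithin_of_mem_nhds (Iic_mem_nhds (zero_lt_one (α := ℝ)))] with ε h1 h2 h3 x
  have h2 : 0 < ε := h2
  have h3 : ε ≤ 1 := h3
  have hin : ContDiff ℝ (⊤ : ℕ∞) (fun x => Q x / ε) := hQ.div_const ε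
  have hs : ContDiff ℝ (⊤ : ℕ∞) (fun x => ((Q x / ε) ^ a * χ (Q x / ε)) • g x) :=
    ((hin.pow a).mul (hχ.comp hin)).smul hg
  have he : (fun x => Q x ^ a * χ (Q x / ε) * g x) =
      ε ^ a • (fun x => ((Q x / ε) ^ a * χ (Q x / ε)) • g x) := by
    funext x
    simp only [Pi.smul_apply, smul_eq_mul, div_pow]
    field_simp
  -- write `a = i + d + 1`: one factor `ε` gives smallness, and `ε^d ≤ 1`
  rw [he, iteratedFDeriv_const_smul_apply (hs.of_le (by exact_mod_cast le_top)).contDiffAt,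
    norm_smul, Real.norm_of_nonneg (by positivity)]
  obtain ⟨d, rfl⟩ := Nat.exists_eq_add_of_lt hia
  calc ε ^ (i + d + 1) * _ ≤ ε ^ (i + d + 1) * (|C| * ε⁻¹ ^ i) := by
        gcongr
        exact (hC ε h2 h3 x).trans (by gcongr; exact le_abs_self C)
    _ = |C| * ε * ε ^ d := by
        rw [pow_succ, pow_add, inv_pow]; field_simp
    _ ≤ |C| * ε * 1 := by
        gcongr
        exact pow_le_one₀ h2.le h3
    _ ≤ η := by rw [mul_one]; exact h1.le

/-- Countably many bump functions supported in `U`, such that near each point of `U` one of them is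
equal to one. -/
theorem exists_bump_sequence {E : Type} [NormedAddCommGroup E] [NormedSpace ℝ E]
    [FiniteDimensional ℝ E] {U : Set E} (hU : IsOpen U) :
    ∃ c : ℕ → E → ℝ, (∀ j, ContDiff ℝ (⊤ : ℕ∞) (c j)) ∧ (∀ j, HasCompactSupport (c j)) ∧
      (∀ j, tsupport (c j) ⊆ U) ∧ ∀ y ∈ U, ∃ j, c j =ᶠ[𝓝 y] 1 := by
  rcases U.eq_empty_or_nonempty with rfl | hne
  · refine ⟨fun _ _ => 0, fun _ => contDiff_const, fun _ => HasCompactSupport.zero, fun _ => ?_, by simp⟩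
    simp [tsupport]
  have key : ∀ y ∈ U, ∃ b : ContDiffBump y, tsupport b ⊆ U := by
    intro y hy
    obtain ⟨r, hr, hrU⟩ := Metric.isOpen_iff.1 hU y hy
    refine ⟨⟨r / 4, r / 2, by positivity, by linarith⟩, ?_⟩
    rw [ContDiffBump.tsupport_eq]
    exact (Metric.closedBall_subset_ball (by linarith)).trans hrU
  choose! b hb using key
  obtain ⟨t, htU, htc, hcov⟩ := TopologicalSpace.countable_cover_nhdsWithin
    (f := fun y => Metric.ball y (b y).rIn) (s := U)
    fun y _ => mem_nhdsWithin_of_mem_nhds (Metric.ball_mem_nhds y (b y).rIn_pos)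
  have htne : t.Nonempty := by
    obtain ⟨y, hy⟩ := hne
    obtain ⟨z, hz, -⟩ := Set.mem_iUnion₂.1 (hcov hy)
    exact ⟨z, hz⟩
  obtain ⟨e, rfl⟩ := htc.exists_eq_range htne
  have heU : ∀ j, e j ∈ U := fun j => htU ⟨j, rfl⟩
  refine ⟨fun j => b (e j), fun j => (b (e j)).contDiff, fun j => (b (e j)).hasCompactSupport,
    fun j => hb _ (heU j), fun y hy => ?_⟩
  obtain ⟨z, ⟨j, rfl⟩, hz⟩ := Set.mem_iUnion₂.1 (hcov hy)
  exact ⟨j, (b (e j)).eventuallyEq_one_of_mem_ball hz⟩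

theorem contDiff_mul_of_tsupport_subset {E : Type} [NormedAddCommGroup E] [NormedSpace ℝ E]
    {U : Set E} (hU : IsOpen U) {c f : E → ℝ} (hc : ContDiff ℝ (⊤ : ℕ∞) c)
    (hcU : tsupport c ⊆ U) (hf : ContDiffOn ℝ (⊤ : ℕ∞) f U) :
    ContDiff ℝ (⊤ : ℕ∞) (fun x => c x * f x) := by
  rw [contDiff_iff_contDiffAt]
  intro x
  by_cases hx : x ∈ tsupport c
  · exact hc.contDiffAt.mul (hf.contDiffAt (hU.mem_nhds (hcU hx)))
  · refine (contDiffAt_const (c := (0 : ℝ))).congr_of_eventuallyEq ?_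
    filter_upwards [notMem_tsupport_iff_eventuallyEq.1 hx] with z hz
    simp [hz]

/-- Borel's lemma along the zero set of `Q`: there is a function `F`, smooth on `U`, whose expansion
in powers of `Q` near each zero of `Q` in `U` is `∑ Q^k f_k`. -/
theorem exists_borel {E : Type} [NormedAddCommGroup E] [NormedSpace ℝ E]
    [FiniteDimensional ℝ E] {Q : E → ℝ} (hQ : ContDiff ℝ (⊤ : ℕ∞) Q) {U : Set E} (hU : IsOpen U)
    {f : ℕ → E → ℝ} (hf : ∀ k, ContDiffOn ℝ (⊤ : ℕ∞) (f k) U) :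
    ∃ F : E → ℝ, ∀ y ∈ U, ContDiffAt ℝ (⊤ : ℕ∞) F y ∧
      (Q y = 0 → ∀ K, ∃ h : E → ℝ, ContDiffAt ℝ (⊤ : ℕ∞) h y ∧
        F =ᶠ[𝓝 y] fun x => ∑ k ∈ Finset.range K, Q x ^ k * f k x + Q x ^ K * h x) := by
  obtain ⟨c, hc, hcc, hcU, hc1⟩ := exists_bump_sequence hU
  let b : ContDiffBump (0 : ℝ) := ⟨1, 2, one_pos, one_lt_two⟩
  obtain ⟨χ, hχ, hχc, hχ1⟩ : ∃ χ : ℝ → ℝ, ContDiff ℝ (⊤ : ℕ∞) χ ∧ HasCompactSupport χ ∧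
      χ =ᶠ[𝓝 0] 1 := ⟨b, b.contDiff, b.hasCompactSupport, b.eventuallyEq_one⟩
  have hcf : ∀ j k, ContDiff ℝ (⊤ : ℕ∞) (fun x => c j x * f k x) := fun j k =>
    contDiff_mul_of_tsupport_subset hU (hc j) (hcU j) (hf k)
  have hcfc : ∀ j k, HasCompactSupport (fun x => c j x * f k x) := fun j k => (hcc j).mul_right
  -- The scale `ε k` makes finitely many seminorms of the `k`-th term small: one for each bump `c j`
  -- with `j ≤ k`. Smaller powers `a ≤ k` are included in order to control the tails with a
  -- power of `Q` factored out.
  have hε : ∀ k : ℕ, ∃ ε : ℝ, 0 < ε ∧ ∀ j ≤ k, ∀ a ≤ k, ∀ i < a, ∀ x,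
      ‖iteratedFDeriv ℝ i (fun x => Q x ^ a * χ (Q x / ε) * (c j x * f k x)) x‖
        ≤ (1 / 2 : ℝ) ^ k := by
    intro k
    have : ∀ᶠ ε in 𝓝[>] (0 : ℝ), ∀ j ∈ Finset.range (k + 1), ∀ a ∈ Finset.range (k + 1),
        ∀ i ∈ Finset.range a, ∀ x,
      ‖iteratedFDeriv ℝ i (fun x => Q x ^ a * χ (Q x / ε) * (c j x * f k x)) x‖
        ≤ (1 / 2 : ℝ) ^ k := by
      rw [Finset.eventually_all]
      intro j _
      rw [Finset.eventually_all]
      intro a _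
      rw [Finset.eventually_all]
      intro i hi
      exact exists_cutoff_scale hQ hχ hχc (hcf j k) (hcfc j k) (Finset.mem_range.1 hi)
        (by positivity)
    obtain ⟨ε, h1, h2⟩ := (this.and self_mem_nhdsWithin).exists
    exact ⟨ε, h2, fun j hj a ha i hi => h1 j (Finset.mem_range.2 (by omega)) a
      (Finset.mem_range.2 (by omega)) i (Finset.mem_range.2 hi)⟩
  choose ε hε0 hε using hε
  have hsm : ∀ k, ContDiff ℝ (⊤ : ℕ∞) (fun x => χ (Q x / ε k)) := fun k =>
    hχ.comp (hQ.div_const _)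
  -- near a point where `c j = 1`, every tail of the series is `Q ^ J` times a smooth function
  have main : ∀ y ∈ U, ∃ j, ∀ J, j ≤ J → ∃ H : E → ℝ, ContDiff ℝ (⊤ : ℕ∞) H ∧
      (fun x => ∑' k, Q x ^ k * χ (Q x / ε k) * f k x) =ᶠ[𝓝 y] fun x =>
        ∑ k ∈ Finset.range J, Q x ^ k * χ (Q x / ε k) * f k x + Q x ^ J * H x := by
    intro y hy
    obtain ⟨j, hj⟩ := hc1 y hy
    refine ⟨j, fun J hJ => ⟨fun x => ∑' k, Q x ^ k * χ (Q x / ε (k + J)) *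
      (c j x * f (k + J) x), ?_, ?_⟩⟩
    · refine contDiff_tsum_of_eventually (v := fun _ k => (1 / 2 : ℝ) ^ k) (fun k =>
        ((hQ.pow k).mul (hsm _)).mul (hcf _ _)) (fun _ _ => summable_geometric_two) ?_
      intro r _
      rw [Nat.cofinite_eq_atTop]
      filter_upwards [eventually_gt_atTop r] with k hk x
      refine (hε (k + J) j (by omega) k (by omega) r hk x).trans ?_
      exact pow_le_pow_of_le_one (by norm_num) (by norm_num) (by omega)
    · filter_upwards [hj] with x hx
      have hs : Summable fun k => Q x ^ k * χ (Q x / ε (k + J)) * (c j x * f (k + J) x) := by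
        refine Summable.of_norm_bounded_eventually_nat (g := fun k => (1 / 2 : ℝ) ^ k)
          summable_geometric_two ?_
        filter_upwards [eventually_gt_atTop 0] with k hk
        have := hε (k + J) j (by omega) k (by omega) 0 hk x
        rw [norm_iteratedFDeriv_zero] at this
        exact this.trans (pow_le_pow_of_le_one (by norm_num) (by norm_num) (by omega))
      have he : ∀ k, Q x ^ (k + J) * χ (Q x / ε (k + J)) * f (k + J) x =
          Q x ^ J * (Q x ^ k * χ (Q x / ε (k + J)) * (c j x * f (k + J) x)) := by
        intro k
        rw [hx, Pi.one_apply, pow_add]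
        ring
      have hs' : Summable fun k => Q x ^ k * χ (Q x / ε k) * f k x := by
        rw [← summable_nat_add_iff J]
        simp only [he]
        exact hs.mul_left _
      rw [← hs'.sum_add_tsum_nat_add J]
      simp only [he]
      rw [tsum_mul_left]
  refine ⟨fun x => ∑' k, Q x ^ k * χ (Q x / ε k) * f k x, fun y hy => ?_⟩
  obtain ⟨j, hj⟩ := main y hy
  have hfy : ∀ k, ContDiffAt ℝ (⊤ : ℕ∞) (f k) y := fun k => (hf k).contDiffAt (hU.mem_nhds hy)
  refine ⟨?_, fun hQy K => ?_⟩
  · obtain ⟨H, hH, he⟩ := hj j le_rfl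
    refine ContDiffAt.congr_of_eventuallyEq ?_ he
    exact (ContDiffAt.sum fun k _ => ((hQ.contDiffAt.pow k).mul (hsm k).contDiffAt).mul (hfy k)).add
      ((hQ.contDiffAt.pow j).mul hH.contDiffAt)
  · obtain ⟨H, hH, he⟩ := hj (K + j) (by omega)
    refine ⟨fun x => ∑ k ∈ Finset.range j, Q x ^ k * f (K + k) x + Q x ^ j * H x,
      (ContDiffAt.sum fun k _ => (hQ.contDiffAt.pow k).mul (hfy _)).add
      ((hQ.contDiffAt.pow j).mul hH.contDiffAt), ?_⟩
    have hone : ∀ᶠ x in 𝓝 y, ∀ k ∈ Finset.range (K + j), χ (Q x / ε k) = 1 := by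
      rw [Finset.eventually_all]
      intro k _
      have ht : Tendsto (fun x => Q x / ε k) (𝓝 y) (𝓝 0) := by
        have := (hQ.continuous.div_const (ε k)).tendsto y
        rwa [hQy, zero_div] at this
      exact ht.eventually hχ1
    filter_upwards [he, hone] with x hx h1
    rw [hx, Finset.sum_congr rfl fun k hk => by rw [h1 k hk, mul_one], Finset.sum_range_add,
      mul_add, Finset.mul_sum, pow_add, ← mul_assoc, add_assoc]
    congr 2
    refine Finset.sum_congr rfl fun k _ => ?_
    rw [pow_add]; ring

/-! ### The ambient Laplacian and homogeneous functions -/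

variable {p q : ℕ}

theorem htMat_symm (I J : Idx p q) : htMat p q I J = htMat p q J I := by
  rcases I with u | i | u <;> rcases J with v | j | v <;>
    simp [htMat, hMat, Matrix.diagonal_apply]
  by_cases h : i = j
  · subst h; rfl
  · rw [if_neg h, if_neg (Ne.symm h)]

theorem htMat_mul_self : htMat p q * htMat p q = 1 := by
  ext I J
  rw [Matrix.mul_apply, Fintype.sum_sum_type, Fintype.sum_sum_type]
  rcases I with u | i | u <;> rcases J with v | j | v <;>
    simp [htMat, hMat, Matrix.diagonal_apply, Matrix.one_apply]
  by_cases h : i = j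
  · subst h
    split_ifs <;> norm_num
  · simp [h]

theorem htMat_inv : (htMat p q)⁻¹ = htMat p q := Matrix.inv_eq_left_inv htMat_mul_self

theorem sum_htMat_mul (I K : Idx p q) :
    ∑ J, htMat p q I J * htMat p q J K = if I = K then 1 else 0 := by
  rw [← Matrix.mul_apply, htMat_mul_self, Matrix.one_apply]

theorem contDiff_QForm : ContDiff ℝ (⊤ : ℕ∞) (QForm p q) := by
  unfold QForm
  fun_prop

theorem QForm_smul (l : ℝ) (x : Idx p q → ℝ) : QForm p q (l • x) = l ^ 2 * QForm p q x := by
  simp only [QForm, Finset.mul_sum, Pi.smul_apply, smul_eq_mul]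
  refine Finset.sum_congr rfl fun I _ => Finset.sum_congr rfl fun J _ => ?_
  ring

theorem two_le_infty : (2 : WithTop ℕ∞) ≤ ((⊤ : ℕ∞) : WithTop ℕ∞) := by
  exact WithTop.coe_le_coe.2 (le_top : (2 : ℕ∞) ≤ ⊤)

theorem pderiv_congr {f g : (Idx p q → ℝ) → ℝ} {x : Idx p q → ℝ} (h : f =ᶠ[𝓝 x] g)
    (I : Idx p q) : pderiv p q I f =ᶠ[𝓝 x] pderiv p q I g := by
  filter_upwards [h.fderiv (𝕜 := ℝ)] with z hz
  simp only [pderiv, hz]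

theorem laplt_congr {f g : (Idx p q → ℝ) → ℝ} {x : Idx p q → ℝ} (h : f =ᶠ[𝓝 x] g) :
    laplt p q f =ᶠ[𝓝 x] laplt p q g := by
  have : ∀ᶠ z in 𝓝 x, ∀ I ∈ Finset.univ, ∀ J ∈ Finset.univ,
      pderiv p q I (pderiv p q J f) z = pderiv p q I (pderiv p q J g) z := by
    rw [Finset.eventually_all]
    intro I _
    rw [Finset.eventually_all]
    intro J _
    exact pderiv_congr (pderiv_congr h J) I
  filter_upwards [this] with z hz
  exact Finset.sum_congr rfl fun I _ => Finset.sum_congr rfl fun J _ => by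
    rw [hz I (Finset.mem_univ _) J (Finset.mem_univ _)]

theorem pderiv_add {f g : (Idx p q → ℝ) → ℝ} {x : Idx p q → ℝ}
    (hf : DifferentiableAt ℝ f x) (hg : DifferentiableAt ℝ g x) (I : Idx p q) :
    pderiv p q I (fun x => f x + g x) x = pderiv p q I f x + pderiv p q I g x := by
  simp [pderiv, fderiv_fun_add hf hg]

theorem pderiv_const_mul {f : (Idx p q → ℝ) → ℝ} {x : Idx p q → ℝ}
    (hf : DifferentiableAt ℝ f x) (c : ℝ) (I : Idx p q) :
    pderiv p q I (fun x => c * f x) x = c * pderiv p q I f x := by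
  simp [pderiv, fderiv_const_mul hf]

theorem pderiv_mul {f g : (Idx p q → ℝ) → ℝ} {x : Idx p q → ℝ}
    (hf : DifferentiableAt ℝ f x) (hg : DifferentiableAt ℝ g x) (I : Idx p q) :
    pderiv p q I (fun x => f x * g x) x = f x * pderiv p q I g x + pderiv p q I f x * g x := by
  simp [pderiv, fderiv_fun_mul hf hg, mul_comm]

theorem pderiv_contDiffAt {f : (Idx p q → ℝ) → ℝ} {x : Idx p q → ℝ} {n k : WithTop ℕ∞}
    (hf : ContDiffAt ℝ n f x) (hk : k + 1 ≤ n) (I : Idx p q) :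
    ContDiffAt ℝ k (pderiv p q I f) x :=
  (hf.fderiv_right hk).clm_apply contDiffAt_const

theorem laplt_contDiffAt {f : (Idx p q → ℝ) → ℝ} {x : Idx p q → ℝ}
    (hf : ContDiffAt ℝ (⊤ : ℕ∞) f x) : ContDiffAt ℝ (⊤ : ℕ∞) (laplt p q f) x := by
  unfold laplt
  exact ContDiffAt.sum fun I _ => ContDiffAt.sum fun J _ =>
    contDiffAt_const.mul (pderiv_contDiffAt (k := (⊤ : ℕ∞)) (pderiv_contDiffAt (k := (⊤ : ℕ∞)) hf (by simp) J)
      (by simp) I)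

theorem eventually_differentiableAt {f : (Idx p q → ℝ) → ℝ} {x : Idx p q → ℝ}
    (hf : ContDiffAt ℝ 2 f x) : ∀ᶠ z in 𝓝 x, DifferentiableAt ℝ f z :=
  (hf.eventually (by simp)).mono fun _ hz => hz.differentiableAt (by simp)

theorem pderiv_differentiableAt {f : (Idx p q → ℝ) → ℝ} {x : Idx p q → ℝ}
    (hf : ContDiffAt ℝ 2 f x) (J : Idx p q) : DifferentiableAt ℝ (pderiv p q J f) x :=
  (pderiv_contDiffAt (k := 1) hf (by norm_num [one_add_one_eq_two]) J).differentiableAt (by simp)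

theorem laplt_add {f g : (Idx p q → ℝ) → ℝ} {x : Idx p q → ℝ}
    (hf : ContDiffAt ℝ 2 f x) (hg : ContDiffAt ℝ 2 g x) :
    laplt p q (fun x => f x + g x) x = laplt p q f x + laplt p q g x := by
  simp only [laplt, ← Finset.sum_add_distrib, ← mul_add]
  refine Finset.sum_congr rfl fun I _ => Finset.sum_congr rfl fun J _ => ?_
  congr 1
  have : pderiv p q J (fun x => f x + g x) =ᶠ[𝓝 x] fun x => pderiv p q J f x + pderiv p q J g x := by
    filter_upwards [eventually_differentiableAt hf, eventually_differentiableAt hg] with z h1 h2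
    exact pderiv_add h1 h2 J
  rw [(pderiv_congr this I).eq_of_nhds,
    pderiv_add (pderiv_differentiableAt hf J) (pderiv_differentiableAt hg J)]

theorem laplt_const_mul {f : (Idx p q → ℝ) → ℝ} {x : Idx p q → ℝ}
    (hf : ContDiffAt ℝ 2 f x) (c : ℝ) :
    laplt p q (fun x => c * f x) x = c * laplt p q f x := by
  simp only [laplt, Finset.mul_sum]
  refine Finset.sum_congr rfl fun I _ => Finset.sum_congr rfl fun J _ => ?_
  have : pderiv p q J (fun x => c * f x) =ᶠ[𝓝 x] fun x => c * pderiv p q J f x := by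
    filter_upwards [eventually_differentiableAt hf] with z h1
    exact pderiv_const_mul h1 c J
  rw [(pderiv_congr this I).eq_of_nhds, pderiv_const_mul (pderiv_differentiableAt hf J)]
  ring

theorem hasFDerivAt_coord (I : Idx p q) (x : Idx p q → ℝ) :
    HasFDerivAt (fun x : Idx p q → ℝ => x I) (ContinuousLinearMap.proj (R := ℝ) I) x :=
  (ContinuousLinearMap.proj (R := ℝ) (φ := fun _ : Idx p q => ℝ) I).hasFDerivAt

theorem pderiv_coord (I K : Idx p q) (x : Idx p q → ℝ) :
    pderiv p q I (fun x => x K) x = if K = I then 1 else 0 := by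
  rw [pderiv, (hasFDerivAt_coord K x).fderiv]
  simp [Pi.single_apply]

theorem pderiv_sum {ι : Type} (s : Finset ι) {f : ι → (Idx p q → ℝ) → ℝ} {x : Idx p q → ℝ}
    (hf : ∀ i ∈ s, DifferentiableAt ℝ (f i) x) (I : Idx p q) :
    pderiv p q I (fun x => ∑ i ∈ s, f i x) x = ∑ i ∈ s, pderiv p q I (f i) x := by
  simp [pderiv, fderiv_fun_sum hf]

theorem pderiv_QForm (I : Idx p q) (x : Idx p q → ℝ) :
    pderiv p q I (QForm p q) x = ∑ J, 2 * htMat p q I J * x J := by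
  have hc : ∀ K : Idx p q, DifferentiableAt ℝ (fun x : Idx p q → ℝ => x K) x := fun K =>
    (hasFDerivAt_coord K x).differentiableAt
  unfold QForm
  rw [pderiv_sum _ (fun K _ => by fun_prop)]
  have : ∀ K, pderiv p q I (fun x => ∑ L, htMat p q K L * x K * x L) x =
      ∑ L, ((if L = I then htMat p q K L * x K else 0)
        + if K = I then htMat p q K L * x L else 0) := by
    intro K
    rw [pderiv_sum _ (fun K _ => by fun_prop)]
    refine Finset.sum_congr rfl fun L _ => ?_
    rw [pderiv_mul (by fun_prop) (hc L), pderiv_const_mul (hc K), pderiv_coord, pderiv_coord]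
    split_ifs <;> ring
  simp only [this, Finset.sum_add_distrib, Finset.sum_ite_eq', Finset.mem_univ, if_true]
  rw [Finset.sum_comm (f := fun K L => if K = I then htMat p q K L * x L else 0)]
  simp only [Finset.sum_ite_eq', Finset.mem_univ, if_true, ← Finset.sum_add_distrib]
  refine Finset.sum_congr rfl fun J _ => ?_
  rw [htMat_symm J I]
  ring

theorem pderiv_pderiv_QForm (I J : Idx p q) (x : Idx p q → ℝ) :
    pderiv p q I (pderiv p q J (QForm p q)) x = 2 * htMat p q J I := by
  have hc : ∀ K : Idx p q, DifferentiableAt ℝ (fun x : Idx p q → ℝ => x K) x := fun K =>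
    (hasFDerivAt_coord K x).differentiableAt
  rw [show pderiv p q J (QForm p q) = fun x => ∑ K, 2 * htMat p q J K * x K from
    funext fun x => pderiv_QForm J x, pderiv_sum _ (fun K _ => by fun_prop)]
  simp only [pderiv_const_mul (hc _), pderiv_coord]
  simp

/-- Product rule for `Δ̃` with the factor `Q`: the gradient of `Q` is `2x`, which turns the cross
terms into the Euler operator, and `Δ̃Q = 2(n + 2)`. -/
theorem laplt_QForm_mul {g : (Idx p q → ℝ) → ℝ} {x : Idx p q → ℝ} (hg : ContDiffAt ℝ 2 g x) :
    laplt p q (fun x => QForm p q x * g x) x =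
      QForm p q x * laplt p q g x + 4 * euler p q g x + 2 * ((p + q : ℝ) + 2) * g x := by
  have hQ : ContDiff ℝ 2 (QForm p q) := contDiff_QForm.of_le two_le_infty
  have hd : ∀ I J, pderiv p q I (pderiv p q J fun x => QForm p q x * g x) x =
      QForm p q x * pderiv p q I (pderiv p q J g) x + pderiv p q I (QForm p q) x * pderiv p q J g x
      + pderiv p q J (QForm p q) x * pderiv p q I g x + 2 * htMat p q J I * g x := by
    intro I J
    have hgd := hg.differentiableAt (by simp)
    have hQd := hQ.contDiffAt.differentiableAt (x := x) (by simp)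
    have hgJ := pderiv_differentiableAt hg J
    have hQJ := pderiv_differentiableAt hQ.contDiffAt (x := x) J
    have : (pderiv p q J fun x => QForm p q x * g x) =ᶠ[𝓝 x]
        fun x => QForm p q x * pderiv p q J g x + pderiv p q J (QForm p q) x * g x := by
      filter_upwards [eventually_differentiableAt hg] with z hz
      exact pderiv_mul (hQ.contDiffAt.differentiableAt (by simp)) hz J
    rw [(pderiv_congr this I).eq_of_nhds, pderiv_add (hQd.fun_mul hgJ) (hQJ.fun_mul hgd),
      pderiv_mul hQd hgJ, pderiv_mul hQJ hgd, pderiv_pderiv_QForm]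
    ring
  have e1 : ∀ J, ∑ I, htMat p q I J * pderiv p q I (QForm p q) x = 2 * x J := by
    intro J
    simp only [pderiv_QForm, Finset.mul_sum]
    rw [Finset.sum_comm]
    have : ∀ K, ∑ I, htMat p q I J * (2 * htMat p q I K * x K) = 2 * x K * if J = K then 1 else 0 := by
      intro K
      rw [← sum_htMat_mul, Finset.mul_sum]
      refine Finset.sum_congr rfl fun I _ => ?_
      rw [htMat_symm I J]; ring
    simp [this]
  have e2 : ∑ I, ∑ J, htMat p q I J * htMat p q J I = (p + q : ℝ) + 2 := by
    simp only [sum_htMat_mul]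
    simp
    ring
  have e3 : ∀ I, ∑ J, htMat p q I J * pderiv p q J (QForm p q) x = 2 * x I := by
    intro I
    rw [← e1]
    exact Finset.sum_congr rfl fun J _ => by rw [htMat_symm]
  simp only [laplt, htMat_inv, hd, euler]
  have h1 : ∑ I, ∑ J, htMat p q I J * (pderiv p q I (QForm p q) x * pderiv p q J g x) =
      2 * ∑ I, x I * pderiv p q I g x := by
    rw [Finset.sum_comm, Finset.mul_sum]
    refine Finset.sum_congr rfl fun J _ => ?_
    simp only [← mul_assoc, ← Finset.sum_mul, e1]
  have h2 : ∑ I, ∑ J, htMat p q I J * (pderiv p q J (QForm p q) x * pderiv p q I g x) =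
      2 * ∑ I, x I * pderiv p q I g x := by
    rw [Finset.mul_sum]
    refine Finset.sum_congr rfl fun I _ => ?_
    simp only [← mul_assoc, ← Finset.sum_mul, e3]
  have h3 : ∑ I, ∑ J, htMat p q I J * (2 * htMat p q J I * g x) =
      2 * ((p + q : ℝ) + 2) * g x := by
    rw [← e2, Finset.mul_sum, Finset.sum_mul]
    refine Finset.sum_congr rfl fun I _ => ?_
    rw [Finset.mul_sum, Finset.sum_mul]
    refine Finset.sum_congr rfl fun J _ => ?_
    ring
  have h0 : ∑ I, ∑ J, htMat p q I J * (QForm p q x * pderiv p q I (pderiv p q J g) x) =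
      QForm p q x * ∑ I, ∑ J, htMat p q I J * pderiv p q I (pderiv p q J g) x := by
    simp only [Finset.mul_sum]
    refine Finset.sum_congr rfl fun I _ => Finset.sum_congr rfl fun J _ => ?_
    ring
  simp only [mul_add, Finset.sum_add_distrib, h0, h1, h2]
  rw [h3]
  ring

theorem euler_eq_fderiv (f : (Idx p q → ℝ) → ℝ) (x : Idx p q → ℝ) :
    euler p q f x = fderiv ℝ f x x := by
  refine Eq.trans ?_ (congrArg (fderiv ℝ f x) (pi_eq_sum_univ' x)).symm
  rw [map_sum]
  refine Finset.sum_congr rfl fun I _ => ?_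
  rw [map_smul, smul_eq_mul, pderiv]

/-- Positive homogeneity of degree `d` on `U`. -/
def IsHomog (U : Set (Idx p q → ℝ)) (d : ℝ) (f : (Idx p q → ℝ) → ℝ) : Prop :=
  ∀ x ∈ U, ∀ l : ℝ, 0 < l → f (l • x) = l ^ d * f x

/-- Euler's theorem: on each ray, `t^(-d) f(t x)` has derivative zero. -/
theorem isHomog_of_euler {U : Set (Idx p q → ℝ)} (hU : IsOpenCone p q U) {d : ℝ}
    {f : (Idx p q → ℝ) → ℝ} (hf : ContDiffOn ℝ (⊤ : ℕ∞) f U)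
    (h : ∀ x ∈ U, euler p q f x = d * f x) : IsHomog U d f := by
  intro x hx l hl
  have hder : ∀ t ∈ Set.Ioi (0 : ℝ), HasDerivAt (fun t : ℝ => t ^ (-d) * f (t • x)) 0 t := by
    intro t ht
    have ht : 0 < t := ht
    have hfd : DifferentiableAt ℝ f (t • x) :=
      (hf.contDiffAt (hU.1.mem_nhds (hU.2.2 x hx t ht))).differentiableAt (by simp)
    have h1 : HasDerivAt (fun t : ℝ => t • x) x t := by
      simpa using (hasDerivAt_id t).smul_const x
    have h2 := hfd.hasFDerivAt.comp_hasDerivAt t h1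
    have h3 := (Real.hasDerivAt_rpow_const (p := -d) (Or.inl ht.ne')).mul h2
    refine h3.congr_deriv ?_
    have h4 := h _ (hU.2.2 x hx t ht)
    rw [euler_eq_fderiv, map_smul, smul_eq_mul] at h4
    have h5 : fderiv ℝ f (t • x) x = d * f (t • x) / t := by
      rw [← h4]; field_simp
    rw [h5, Real.rpow_sub ht, Real.rpow_one]
    simp only [Function.comp]
    field_simp
    ring
  have hconst := (convex_Ioi (0 : ℝ)).is_const_of_fderivWithin_eq_zero (𝕜 := ℝ)
    (f := fun t : ℝ => t ^ (-d) * f (t • x))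
    (fun t ht => (hder t ht).differentiableAt.differentiableWithinAt)
    (fun t ht => by
      rw [fderivWithin_of_isOpen isOpen_Ioi ht]
      have := (hder t ht).hasFDerivAt.fderiv
      rw [this]; ext; simp) (show l ∈ Set.Ioi (0 : ℝ) from hl)
    (show (1 : ℝ) ∈ Set.Ioi (0 : ℝ) from Set.mem_Ioi.2 one_pos)
  simp only [Real.one_rpow, one_mul, one_smul] at hconst
  rw [← hconst, ← mul_assoc, ← Real.rpow_add hl, add_neg_cancel, Real.rpow_zero, one_mul]

theorem IsHomog.euler_eq {U : Set (Idx p q → ℝ)} {d : ℝ} {f : (Idx p q → ℝ) → ℝ}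
    (h : IsHomog U d f) {x : Idx p q → ℝ} (hx : x ∈ U) (hf : DifferentiableAt ℝ f x) :
    euler p q f x = d * f x := by
  have h1 : HasDerivAt (fun t : ℝ => t • x) x 1 := by
    simpa using (hasDerivAt_id (1 : ℝ)).smul_const x
  have hf' : HasFDerivAt f (fderiv ℝ f x) ((1 : ℝ) • x) := by
    rw [one_smul]; exact hf.hasFDerivAt
  have h2 := hf'.comp_hasDerivAt 1 h1
  have h3 : HasDerivAt (fun t : ℝ => t ^ d * f x) (d * f x) 1 := by
    simpa using (Real.hasDerivAt_rpow_const (p := d) (Or.inl (one_ne_zero (α := ℝ)))).mul_const (f x)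
  have h4 : (f ∘ fun t : ℝ => t • x) =ᶠ[𝓝 1] fun t : ℝ => t ^ d * f x := by
    filter_upwards [lt_mem_nhds (zero_lt_one (α := ℝ))] with t ht
    exact h x hx t ht
  rw [euler_eq_fderiv]
  exact h2.unique (h3.congr_of_eventuallyEq h4)

theorem IsHomog.pderiv {U : Set (Idx p q → ℝ)} (hU : IsOpenCone p q U) {d : ℝ}
    {f : (Idx p q → ℝ) → ℝ} (h : IsHomog U d f) (hf : ContDiffOn ℝ (⊤ : ℕ∞) f U) (I : Idx p q) :
    IsHomog U (d - 1) (pderiv p q I f) := by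
  intro x hx l hl
  have hd : ∀ z ∈ U, DifferentiableAt ℝ f z := fun z hz =>
    (hf.contDiffAt (hU.1.mem_nhds hz)).differentiableAt (by simp)
  have h1 : HasFDerivAt (fun z : Idx p q → ℝ => l • z)
      (l • ContinuousLinearMap.id ℝ (Idx p q → ℝ)) x := (hasFDerivAt_id x).const_smul l
  have h2 := (hd _ (hU.2.2 x hx l hl)).hasFDerivAt.comp x h1
  have h3 : HasFDerivAt (fun z => l ^ d * f z) (l ^ d • fderiv ℝ f x) x :=
    (hd x hx).hasFDerivAt.const_mul _
  have h4 : (f ∘ fun z : Idx p q → ℝ => l • z) =ᶠ[𝓝 x] fun z => l ^ d * f z := by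
    filter_upwards [hU.1.mem_nhds hx] with z hz
    exact h z hz l hl
  have h5 := congrArg (fun L => L (Pi.single I (1 : ℝ))) (h2.unique (h3.congr_of_eventuallyEq h4))
  simp only [ContinuousLinearMap.comp_apply, _root_.smul_apply, smul_eq_mul,
    ContinuousLinearMap.id_apply, map_smul] at h5
  simp only [_root_.pderiv]
  rw [Real.rpow_sub hl, Real.rpow_one, div_mul_eq_mul_div, ← h5]
  field_simp

theorem pderiv_contDiffOn {U : Set (Idx p q → ℝ)} (hU : IsOpen U) {f : (Idx p q → ℝ) → ℝ}
    (hf : ContDiffOn ℝ (⊤ : ℕ∞) f U) (I : Idx p q) :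
    ContDiffOn ℝ (⊤ : ℕ∞) (pderiv p q I f) U := fun _ hx =>
  (pderiv_contDiffAt (hf.contDiffAt (hU.mem_nhds hx)) (by simp) I).contDiffWithinAt

theorem laplt_contDiffOn {U : Set (Idx p q → ℝ)} (hU : IsOpen U) {f : (Idx p q → ℝ) → ℝ}
    (hf : ContDiffOn ℝ (⊤ : ℕ∞) f U) :
    ContDiffOn ℝ (⊤ : ℕ∞) (laplt p q f) U := fun _ hx =>
  (laplt_contDiffAt (hf.contDiffAt (hU.mem_nhds hx))).contDiffWithinAt

theorem IsHomog.laplt {U : Set (Idx p q → ℝ)} (hU : IsOpenCone p q U) {d : ℝ}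
    {f : (Idx p q → ℝ) → ℝ} (h : IsHomog U d f) (hf : ContDiffOn ℝ (⊤ : ℕ∞) f U) :
    IsHomog U (d - 2) (laplt p q f) := by
  intro x hx l hl
  simp only [_root_.laplt, Finset.mul_sum]
  refine Finset.sum_congr rfl fun I _ => Finset.sum_congr rfl fun J _ => ?_
  rw [(h.pderiv hU hf J).pderiv hU (pderiv_contDiffOn hU.1 hf J) I x hx l hl,
    show d - 1 - 1 = d - 2 by ring]
  ring

theorem IsHomog.QForm_pow_mul {U : Set (Idx p q → ℝ)} {d : ℝ}
    {f : (Idx p q → ℝ) → ℝ} (h : IsHomog U d f) (k : ℕ) :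
    IsHomog U (d + 2 * k) (fun x => QForm p q x ^ k * f x) := by
  intro x hx l hl
  simp only [QForm_smul, h x hx l hl]
  rw [Real.rpow_add hl, show (2 : ℝ) * k = ((2 * k : ℕ) : ℝ) by push_cast; ring,
    Real.rpow_natCast, mul_pow, pow_mul]
  ring

/-- The commutator of the Laplacian with `Q ^ k` on functions homogeneous of degree `d`. -/
theorem laplt_QForm_pow_mul {U : Set (Idx p q → ℝ)} (hU : IsOpen U) {d : ℝ}
    {g : (Idx p q → ℝ) → ℝ} (h : IsHomog U d g) (hg : ContDiffOn ℝ (⊤ : ℕ∞) g U) (k : ℕ) :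
    ∀ x ∈ U, laplt p q (fun x => QForm p q x ^ (k + 1) * g x) x =
      QForm p q x ^ (k + 1) * laplt p q g x +
        2 * (k + 1) * (2 * d + (p + q) + 2 * (k + 1)) * (QForm p q x ^ k * g x) := by
  have hga : ∀ x ∈ U, ∀ k : ℕ, ContDiffAt ℝ (⊤ : ℕ∞) (fun x => QForm p q x ^ k * g x) x :=
    fun x hx k => (contDiff_QForm.pow k).contDiffAt.mul (hg.contDiffAt (hU.mem_nhds hx))
  have step : ∀ k : ℕ, ∀ x ∈ U, laplt p q (fun x => QForm p q x ^ (k + 1) * g x) x =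
      QForm p q x * laplt p q (fun x => QForm p q x ^ k * g x) x +
        (4 * (d + 2 * k) + 2 * (p + q + 2)) * (QForm p q x ^ k * g x) := by
    intro k x hx
    simp only [pow_succ', mul_assoc]
    rw [laplt_QForm_mul ((hga x hx k).of_le two_le_infty),
      (h.QForm_pow_mul k).euler_eq hx ((hga x hx k).differentiableAt (by simp))]
    ring
  induction k with
  | zero =>
    intro x hx
    rw [step 0 x hx]
    simp only [pow_zero, one_mul, pow_one, zero_add, CharP.cast_eq_zero]
    ring
  | succ k ih =>
    intro x hx
    rw [step (k + 1) x hx, ih x hx]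
    push_cast
    ring

/-! ### Homogeneous Borel summation -/

/-- The Euclidean norm on `ℝ^{n+2}`, used as a smooth positive function homogeneous of degree one;
the norm of the type `Idx p q → ℝ` is the sup norm, which is not smooth. -/
def eucl (x : Idx p q → ℝ) : ℝ := √(∑ I, x I ^ 2)

theorem sum_sq_pos {x : Idx p q → ℝ} (hx : x ≠ 0) : 0 < ∑ I, x I ^ 2 := by
  obtain ⟨I, hI⟩ := Function.ne_iff.1 hx
  exact Finset.sum_pos' (fun _ _ => sq_nonneg _) ⟨I, Finset.mem_univ _, by
    have : x I ≠ 0 := hI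
    positivity⟩

theorem eucl_pos {x : Idx p q → ℝ} (hx : x ≠ 0) : 0 < eucl x := Real.sqrt_pos.2 (sum_sq_pos hx)

theorem eucl_smul {l : ℝ} (hl : 0 < l) (x : Idx p q → ℝ) : eucl (l • x) = l * eucl x := by
  simp only [eucl, Pi.smul_apply, smul_eq_mul, mul_pow, ← Finset.mul_sum]
  rw [Real.sqrt_mul (by positivity), Real.sqrt_sq hl.le]

theorem contDiffAt_eucl {x : Idx p q → ℝ} (hx : x ≠ 0) : ContDiffAt ℝ (⊤ : ℕ∞) eucl x := by
  unfold eucl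
  refine ContDiffAt.sqrt ?_ (sum_sq_pos hx).ne'
  fun_prop

/-- A series `∑ Q^k f_k` whose terms are all homogeneous of degree `d` is the expansion along the
null cone of a smooth function homogeneous of degree `d`. -/
theorem exists_homog_borel {U : Set (Idx p q → ℝ)} (hU : IsOpenCone p q U) {d : ℝ}
    {f : ℕ → (Idx p q → ℝ) → ℝ} (hf : ∀ k, ContDiffOn ℝ (⊤ : ℕ∞) (f k) U)
    (hh : ∀ k : ℕ, IsHomog U (d - 2 * k) (f k)) :
    ∃ F : (Idx p q → ℝ) → ℝ, ContDiffOn ℝ (⊤ : ℕ∞) F U ∧ IsHomog U d F ∧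
      ∀ y ∈ U, QForm p q y = 0 → ∀ K, ∃ h : (Idx p q → ℝ) → ℝ, ContDiffAt ℝ (⊤ : ℕ∞) h y ∧
        F =ᶠ[𝓝 y] fun x =>
          ∑ k ∈ Finset.range K, QForm p q x ^ k * f k x + QForm p q x ^ K * h x := by
  obtain ⟨F, hF⟩ := exists_borel (contDiff_QForm (p := p) (q := q)) hU.1 hf
  have hpos : ∀ x ∈ U, 0 < eucl x := fun x hx => eucl_pos (hU.2.1 x hx)
  have hmem : ∀ x ∈ U, (eucl x)⁻¹ • x ∈ U := fun x hx => hU.2.2 x hx _ (inv_pos.2 (hpos x hx))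
  have hr : ∀ x ∈ U, ContDiffAt ℝ (⊤ : ℕ∞) eucl x := fun x hx => contDiffAt_eucl (hU.2.1 x hx)
  have hproj : ∀ x ∈ U, ContDiffAt ℝ (⊤ : ℕ∞) (fun x : Idx p q → ℝ => (eucl x)⁻¹ • x) x :=
    fun x hx => ((hr x hx).inv (hpos x hx).ne').smul contDiffAt_id
  have hpow : ∀ x ∈ U, ContDiffAt ℝ (⊤ : ℕ∞) (fun x : Idx p q → ℝ => eucl x ^ d) x :=
    fun x hx => (hr x hx).rpow_const_of_ne (hpos x hx).ne'
  refine ⟨fun x => eucl x ^ d * F ((eucl x)⁻¹ • x), fun x hx => ?_, fun x hx l hl => ?_, ?_⟩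
  · exact ((hpow x hx).mul (ContDiffAt.comp (g := F) (f := fun x : Idx p q → ℝ => (eucl x)⁻¹ • x)
      x (hF _ (hmem x hx)).1 (hproj x hx))).contDiffWithinAt
  · show eucl (l • x) ^ d * F ((eucl (l • x))⁻¹ • (l • x)) =
      l ^ d * (eucl x ^ d * F ((eucl x)⁻¹ • x))
    rw [eucl_smul hl, Real.mul_rpow hl.le (hpos x hx).le, smul_smul, mul_inv, mul_assoc]
    rw [show l⁻¹ * (eucl x)⁻¹ * l = (eucl x)⁻¹ by field_simp]
  · intro y hy hQy K
    obtain ⟨h, hh', he⟩ := (hF _ (hmem y hy)).2 (by rw [QForm_smul, hQy, mul_zero]) K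
    refine ⟨fun x => eucl x ^ d * ((eucl x)⁻¹ ^ 2) ^ K * h ((eucl x)⁻¹ • x),
      ((hpow y hy).mul ((((hr y hy).inv (hpos y hy).ne').pow 2).pow K)).mul
        (ContDiffAt.comp (g := h) (f := fun x : Idx p q → ℝ => (eucl x)⁻¹ • x)
          y hh' (hproj y hy)), ?_⟩
    filter_upwards [(hproj y hy).continuousAt.eventually he, hU.1.mem_nhds hy] with x hx hxU
    rw [hx, mul_add, Finset.mul_sum]
    have h0 := hpos x hxU
    congr 1
    · refine Finset.sum_congr rfl fun k _ => ?_
      rw [QForm_smul, hh k x hxU _ (inv_pos.2 h0), mul_pow, Real.inv_rpow h0.le,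
        Real.rpow_sub h0, show (2 : ℝ) * k = ((2 * k : ℕ) : ℝ) by push_cast; ring,
        Real.rpow_natCast]
      have := Real.rpow_pos_of_pos h0 d
      rw [← pow_mul, inv_pow]
      field_simp
    · rw [QForm_smul, mul_pow]; ring

/-! ### Powers of the ideal generated by `Q` -/

/-- Near `y`, the function `f` is `Q ^ K` times a smooth function. -/
def InQIdeal {F : Type} [NormedAddCommGroup F] [NormedSpace ℝ F] (y : Idx p q → ℝ) (K : ℕ)
    (f : (Idx p q → ℝ) → F) : Prop :=
  ∃ h : (Idx p q → ℝ) → F, ContDiffAt ℝ (⊤ : ℕ∞) h y ∧ f =ᶠ[𝓝 y] fun x => QForm p q x ^ K • h x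

section ideal

variable {F : Type} [NormedAddCommGroup F] [NormedSpace ℝ F] {y : Idx p q → ℝ} {K : ℕ}

theorem InQIdeal.congr {f g : (Idx p q → ℝ) → F} (hf : InQIdeal y K f) (h : g =ᶠ[𝓝 y] f) :
    InQIdeal y K g := by
  obtain ⟨u, hu, he⟩ := hf
  exact ⟨u, hu, h.trans he⟩

theorem InQIdeal.mono {f : (Idx p q → ℝ) → F} {L : ℕ} (hf : InQIdeal y L f) (h : K ≤ L) :
    InQIdeal y K f := by
  obtain ⟨u, hu, he⟩ := hf
  refine ⟨fun x => QForm p q x ^ (L - K) • u x,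
    (contDiff_QForm.pow (L - K)).contDiffAt.smul hu, he.trans ?_⟩
  refine Eventually.of_forall fun x => ?_
  simp only [smul_smul, ← pow_add]
  rw [Nat.add_sub_cancel' h]

theorem InQIdeal.add {f g : (Idx p q → ℝ) → F} (hf : InQIdeal y K f) (hg : InQIdeal y K g) :
    InQIdeal y K (fun x => f x + g x) := by
  obtain ⟨u, hu, he⟩ := hf
  obtain ⟨v, hv, he'⟩ := hg
  refine ⟨fun x => u x + v x, hu.add hv, ?_⟩
  filter_upwards [he, he'] with x h1 h2
  rw [h1, h2, smul_add]

theorem InQIdeal.zero : InQIdeal y K (fun _ => (0 : F)) :=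
  ⟨fun _ => 0, contDiffAt_const, by simp⟩

theorem InQIdeal.sum {ι : Type} (s : Finset ι) {f : ι → (Idx p q → ℝ) → F}
    (hf : ∀ i ∈ s, InQIdeal y K (f i)) : InQIdeal y K (fun x => ∑ i ∈ s, f i x) := by
  classical
  induction s using Finset.induction_on with
  | empty => simpa using InQIdeal.zero
  | insert i s hi ih =>
    simp only [Finset.sum_insert hi]
    exact (hf i (Finset.mem_insert_self i s)).add
      (ih fun j hj => hf j (Finset.mem_insert_of_mem hj))

/-- Differentiation costs one power of `Q`, as
`D(Q^(K+1) u) = Q^K (Q Du + (K+1) DQ ⊗ u)`. -/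
theorem InQIdeal.fderiv {f : (Idx p q → ℝ) → F} (hf : InQIdeal y (K + 1) f) :
    InQIdeal y K (fderiv ℝ f) := by
  obtain ⟨u, hu, he⟩ := hf
  have hQ := contDiff_QForm (p := p) (q := q)
  have hQ' : ContDiff ℝ (⊤ : ℕ∞) (_root_.fderiv ℝ (QForm p q)) := hQ.fderiv_right (by simp)
  refine ⟨fun x => QForm p q x • _root_.fderiv ℝ u x +
    ((K : ℝ) + 1) • (_root_.fderiv ℝ (QForm p q) x).smulRight (u x),
    (hQ.contDiffAt.smul (hu.fderiv_right (by simp))).add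
      ((contDiffAt_const (c := (K : ℝ) + 1)).smul (hQ'.contDiffAt.smulRight hu)), ?_⟩
  have hd : ∀ᶠ x in 𝓝 y, DifferentiableAt ℝ u x :=
    ((hu.of_le two_le_infty).eventually (by simp)).mono fun _ hz => hz.differentiableAt (by simp)
  filter_upwards [he.fderiv (𝕜 := ℝ), hd] with x hx hdx
  have hQx : HasFDerivAt (QForm p q) (_root_.fderiv ℝ (QForm p q) x) x :=
    (hQ.differentiable (by simp) x).hasFDerivAt
  have h1 := (hQx.pow (K + 1)).smul hdx.hasFDerivAt
  rw [hx]
  refine (HasFDerivAt.fderiv h1).trans ?_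
  ext v
  simp [pow_succ, smul_smul]
  module

/-- A function divisible by `Q^(k+1)` near a zero `y` of `Q` has vanishing `k`-th derivative at `y`.
The induction passes to the Fréchet derivative, which changes the target space. -/
theorem InQIdeal.iteratedFDeriv_eq_zero (hy : QForm p q y = 0) (k : ℕ) :
    ∀ {F : Type} [NormedAddCommGroup F] [NormedSpace ℝ F] {f : (Idx p q → ℝ) → F},
      InQIdeal y (k + 1) f → iteratedFDeriv ℝ k f y = 0 := by
  induction k with
  | zero =>
    intro F _ _ f hf
    obtain ⟨u, hu, he⟩ := hf
    rw [← norm_eq_zero, norm_iteratedFDeriv_zero, he.eq_of_nhds, hy]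
    simp
  | succ k ih =>
    intro F _ _ f hf
    rw [← norm_eq_zero, ← norm_iteratedFDeriv_fderiv, norm_eq_zero]
    exact ih hf.fderiv

theorem InQIdeal.pderiv {f : (Idx p q → ℝ) → ℝ} (hf : InQIdeal y (K + 1) f) (I : Idx p q) :
    InQIdeal y K (pderiv p q I f) := by
  obtain ⟨u, hu, he⟩ := hf.fderiv
  refine ⟨fun x => u x (Pi.single I 1), hu.clm_apply contDiffAt_const, ?_⟩
  filter_upwards [he] with x hx
  simp [_root_.pderiv, hx]

theorem InQIdeal.smooth_mul {f g : (Idx p q → ℝ) → ℝ} (hf : InQIdeal y K f)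
    (hg : ContDiffAt ℝ (⊤ : ℕ∞) g y) : InQIdeal y K (fun x => g x * f x) := by
  obtain ⟨u, hu, he⟩ := hf
  refine ⟨fun x => g x * u x, hg.mul hu, ?_⟩
  filter_upwards [he] with x hx
  rw [hx, smul_eq_mul, smul_eq_mul]; ring

theorem InQIdeal.laplt {f : (Idx p q → ℝ) → ℝ} (hf : InQIdeal y (K + 2) f) :
    InQIdeal y K (laplt p q f) :=
  InQIdeal.sum _ fun I _ => InQIdeal.sum _ fun J _ =>
    ((InQIdeal.pderiv (K := K + 1) hf J).pderiv I).smooth_mul contDiffAt_const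

end ideal

/-! ### The formal solution -/

section series

variable {U : Set (Idx p q → ℝ)} {d : ℝ} {g : ℕ → (Idx p q → ℝ) → ℝ} {a γ : ℕ → ℝ}

theorem contDiffAt_term (hU : IsOpen U) (hg : ∀ k, ContDiffOn ℝ (⊤ : ℕ∞) (g k) U)
    {x : Idx p q → ℝ} (hx : x ∈ U) (k : ℕ) :
    ContDiffAt ℝ (⊤ : ℕ∞) (fun x => QForm p q x ^ k * (a k * g k x)) x :=
  (contDiff_QForm.pow k).contDiffAt.mul
    (contDiffAt_const.mul ((hg k).contDiffAt (hU.mem_nhds hx)))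

/-- If `g_{k+1} = Δ̃g_k` and `a` satisfies the recurrence with inhomogeneity `γ`, then in
`Δ̃ ∑_{k ≤ K} a_k Q^k g_k` the coefficient of `Q^k g_{k+1}` is `-γ_k`, apart from a boundary term
at `k = K`. -/
theorem laplt_partial_sum (hU : IsOpen U) (hg : ∀ k, ContDiffOn ℝ (⊤ : ℕ∞) (g k) U)
    (hh : ∀ k : ℕ, IsHomog U (d - 2 * k) (g k)) (hlap : ∀ k, laplt p q (g k) = g (k + 1))
    (ha : ∀ k : ℕ, a k + 2 * (k + 1) * (2 * d + (p + q) - 2 * (k + 1)) * a (k + 1) + γ k = 0)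
    {x : Idx p q → ℝ} (hx : x ∈ U) (K : ℕ) :
    laplt p q (fun x => ∑ k ∈ Finset.range (K + 1), QForm p q x ^ k * (a k * g k x)) x =
      -∑ k ∈ Finset.range K, γ k * (QForm p q x ^ k * g (k + 1) x)
        + a K * (QForm p q x ^ K * g (K + 1) x) := by
  induction K with
  | zero =>
    simp only [zero_add, Finset.sum_range_one, pow_zero, one_mul, Finset.range_zero,
      Finset.sum_empty, neg_zero]
    rw [laplt_const_mul (((hg 0).contDiffAt (hU.mem_nhds hx)).of_le two_le_infty), hlap]
  | succ K ih =>
    have hc : ContDiffAt ℝ 2 (fun x => QForm p q x ^ (K + 1) * g (K + 1) x) x :=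
      ((contDiff_QForm.pow (K + 1)).contDiffAt.mul
        ((hg (K + 1)).contDiffAt (hU.mem_nhds hx))).of_le two_le_infty
    have hsum : ContDiffAt ℝ 2
        (fun x => ∑ k ∈ Finset.range (K + 1), QForm p q x ^ k * (a k * g k x)) x :=
      (ContDiffAt.sum fun k _ => contDiffAt_term hU hg hx k).of_le two_le_infty
    simp only [Finset.sum_range_succ _ (K + 1), mul_left_comm _ (a (K + 1))]
    rw [laplt_add hsum (contDiffAt_const.mul hc), laplt_const_mul hc, ih,
      laplt_QForm_pow_mul hU (hh (K + 1)) (hg (K + 1)) K x hx, hlap, Finset.sum_range_succ _ K]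
    push_cast
    linear_combination (QForm p q x ^ K * g (K + 1) x) * ha K

/-- If `F` has expansion `∑ a_k Q^k g_k` with coefficients as in `laplt_partial_sum`, then `Δ̃F` has
expansion `-∑ γ_k Q^k g_{k+1}`. Two powers of `Q` are lost in the remainder. -/
theorem laplt_expansion (hU : IsOpen U) (hg : ∀ k, ContDiffOn ℝ (⊤ : ℕ∞) (g k) U)
    (hh : ∀ k : ℕ, IsHomog U (d - 2 * k) (g k)) (hlap : ∀ k, laplt p q (g k) = g (k + 1))
    (ha : ∀ k : ℕ, a k + 2 * (k + 1) * (2 * d + (p + q) - 2 * (k + 1)) * a (k + 1) + γ k = 0)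
    {y : Idx p q → ℝ} (hy : y ∈ U) (K : ℕ) {F h : (Idx p q → ℝ) → ℝ}
    (hsm : ContDiffAt ℝ (⊤ : ℕ∞) h y)
    (hF : F =ᶠ[𝓝 y] fun x => ∑ k ∈ Finset.range (K + 2), QForm p q x ^ k * (a k * g k x)
      + QForm p q x ^ (K + 2) * h x) :
    ∃ ρ : (Idx p q → ℝ) → ℝ, InQIdeal y K ρ ∧ laplt p q F =ᶠ[𝓝 y] fun x =>
      -∑ k ∈ Finset.range (K + 1), γ k * (QForm p q x ^ k * g (k + 1) x) + ρ x := by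
  have hR : InQIdeal y (K + 2) (fun x => QForm p q x ^ (K + 2) * h x) :=
    ⟨h, hsm, by simp only [smul_eq_mul]; exact EventuallyEq.rfl⟩
  have hG : InQIdeal y (K + 1) (fun x => a (K + 1) * (QForm p q x ^ (K + 1) * g (K + 2) x)) :=
    ⟨fun x => a (K + 1) * g (K + 2) x,
      contDiffAt_const.mul ((hg _).contDiffAt (hU.mem_nhds hy)),
      Eventually.of_forall fun x => by simp only [smul_eq_mul]; ring⟩
  refine ⟨_, (hG.mono (Nat.le_succ K)).add hR.laplt, (laplt_congr hF).trans ?_⟩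
  have hRc : ∀ᶠ x in 𝓝 y, ContDiffAt ℝ 2 (fun x => QForm p q x ^ (K + 2) * h x) x :=
    ((((contDiff_QForm.pow (K + 2)).contDiffAt).mul hsm).of_le two_le_infty).eventually (by simp)
  filter_upwards [hRc, hU.mem_nhds hy] with x hx hxU
  have hsum : ContDiffAt ℝ 2
      (fun x => ∑ k ∈ Finset.range (K + 2), QForm p q x ^ k * (a k * g k x)) x :=
    (ContDiffAt.sum fun k _ => contDiffAt_term hU hg hxU k).of_le two_le_infty
  rw [laplt_add hsum hx, laplt_partial_sum hU hg hh hlap ha hxU (K + 1), add_assoc]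

end series

/-- The scalar recurrences for the coefficients of `s̃` and `l̃` are solvable. At `k + 1 = m` the
coefficient of `a (k + 1)` is zero, so that equation fixes `b 0 = -a (m - 1) / (4 * m)`. -/
theorem exists_coefficients {m : ℕ} (hm : 1 ≤ m) : ∃ a b : ℕ → ℝ, a 0 = 1 ∧
    (∀ k : ℕ, b k - 4 * (k + 1) * (m + (k + 1)) * b (k + 1) = 0) ∧
    ∀ k : ℕ, a k + 4 * (k + 1) * (m - (k + 1)) * a (k + 1) +
      (if m ≤ k + 1 then 4 * m * b (k + 1 - m) else 0) = 0 := by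
  -- `α` is `a` without the log terms. It is needed to define `b 0` before `a`, and agrees with `a`
  -- below `m`; the junk value of the division by zero at `k + 1 = m` (which gives `a m = 0`) is a
  -- valid choice, as `a m` is free.
  let α : ℕ → ℝ := fun k => Nat.rec 1 (fun k r => -r / (4 * (k + 1) * (m - (k + 1)))) k
  let b : ℕ → ℝ := fun k => Nat.rec (-α (m - 1) / (4 * m))
    (fun k r => r / (4 * (k + 1) * (m + (k + 1)))) k
  let β : ℕ → ℝ := fun k => if m ≤ k + 1 then 4 * m * b (k + 1 - m) else 0
  let a : ℕ → ℝ := fun k => Nat.rec 1 (fun k r => -(r + β k) / (4 * (k + 1) * (m - (k + 1)))) k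
  have hα : ∀ k, α (k + 1) = -α k / (4 * (k + 1) * (m - (k + 1))) := fun _ => rfl
  have hb : ∀ k, b (k + 1) = b k / (4 * (k + 1) * (m + (k + 1))) := fun _ => rfl
  have ha : ∀ k, a (k + 1) = -(a k + β k) / (4 * (k + 1) * (m - (k + 1))) := fun _ => rfl
  have hm0 : (m : ℝ) ≠ 0 := by positivity
  have hagree : ∀ k, k < m → a k = α k := by
    intro k
    induction k with
    | zero => intro _; rfl
    | succ k ih =>
      intro hk
      rw [ha, hα, ih (by omega), show β k = 0 from if_neg (by omega), add_zero]
  refine ⟨a, b, rfl, fun k => ?_, fun k => ?_⟩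
  · rw [hb]
    have : (m : ℝ) + (k + 1) ≠ 0 := by positivity
    have : (k : ℝ) + 1 ≠ 0 := by positivity
    field_simp
    ring
  · change a k + 4 * (k + 1) * (m - (k + 1)) * a (k + 1) + β k = 0
    by_cases hk : k + 1 = m
    · have h0 : (m : ℝ) - (k + 1) = 0 := by rw [← hk]; push_cast; ring
      have hβ : β k = 4 * m * (-α (m - 1) / (4 * m)) := by
        have : k + 1 - m = 0 := by omega
        simp only [β, this]
        exact if_pos (by omega)
      rw [h0, hβ, hagree k (by omega), show m - 1 = k by omega]
      field_simp
      ring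
    · have h0 : (m : ℝ) - (k + 1) ≠ 0 := by
        intro h
        apply hk
        have : (m : ℝ) = k + 1 := by linarith
        exact_mod_cast this.symm
      have : (k : ℝ) + 1 ≠ 0 := by positivity
      rw [ha]
      field_simp
      ring
/-- Existence of a harmonic extension with log term in the obstructed case
`w = m - n/2`: there exist smooth `s̃, l̃` homogeneous of degrees `w` and `w - 2m`
with `s̃ = f̃₀` on `N ∩ U`, `Δ̃l̃` vanishing to infinite order on `N ∩ U`, and
`Δ̃s̃ + 4m Q^{m-1} l̃` vanishing to infinite order on `N ∩ U` (so that
`f̃ = s̃ + l̃ Q^m log|Q|` is harmonic to infinite order along the null cone). -/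
theorem statement14 (p q : ℕ) (hn : 3 ≤ p + q)
    (m : ℕ) (hm : 1 ≤ m)
    (U : Set (Idx p q → ℝ)) (hU : IsOpenCone p q U)
    (ft0 : (Idx p q → ℝ) → ℝ) (hft0 : ContDiffOn ℝ (⊤ : ℕ∞) ft0 U)
    (hhom0 : ∀ x ∈ U, euler p q ft0 x = ((m : ℝ) - (p + q : ℝ) / 2) * ft0 x) :
    ∃ st lt : (Idx p q → ℝ) → ℝ,
      ContDiffOn ℝ (⊤ : ℕ∞) st U ∧ ContDiffOn ℝ (⊤ : ℕ∞) lt U ∧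
      (∀ x ∈ U, euler p q st x = ((m : ℝ) - (p + q : ℝ) / 2) * st x) ∧
      (∀ x ∈ U, euler p q lt x
          = (((m : ℝ) - (p + q : ℝ) / 2) - 2 * (m : ℝ)) * lt x) ∧
      (∀ y ∈ nullCone p q ∩ U, st y = ft0 y) ∧
      (∀ y ∈ nullCone p q ∩ U, VanishesToInfOrderAt p q (laplt p q lt) y) ∧
      (∀ y ∈ nullCone p q ∩ U,
        VanishesToInfOrderAt p q
          (fun x => laplt p q st x
            + 4 * (m : ℝ) * QForm p q x ^ (m - 1) * lt x) y) := by
  obtain ⟨a, b, ha0, hb, ha⟩ := exists_coefficients hm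
  set w : ℝ := (m : ℝ) - (p + q : ℝ) / 2 with hw
  let g : ℕ → (Idx p q → ℝ) → ℝ := fun k => (laplt p q)^[k] ft0
  have hlap : ∀ k, laplt p q (g k) = g (k + 1) := fun k =>
    (Function.iterate_succ_apply' (laplt p q) k ft0).symm
  have hg : ∀ k, ContDiffOn ℝ (⊤ : ℕ∞) (g k) U := by
    intro k
    induction k with
    | zero => exact hft0
    | succ k ih => rw [← hlap]; exact laplt_contDiffOn hU.1 ih
  have hh : ∀ k : ℕ, IsHomog U (w - 2 * k) (g k) := by
    intro k
    induction k with
    | zero => simpa [g] using isHomog_of_euler hU hft0 hhom0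
    | succ k ih =>
      rw [← hlap, show w - 2 * ((k + 1 : ℕ) : ℝ) = w - 2 * k - 2 by push_cast; ring]
      exact ih.laplt hU (hg k)
  have hh' : ∀ k : ℕ, IsHomog U (w - 2 * m - 2 * k) (g (m + k)) := by
    intro k
    have := hh (m + k)
    rwa [show w - 2 * ((m + k : ℕ) : ℝ) = w - 2 * m - 2 * k by push_cast; ring] at this
  have hcm : ∀ (c e : ℝ) (f : (Idx p q → ℝ) → ℝ), IsHomog U e f → IsHomog U e (fun x => c * f x) :=
    fun c e f hf x hx l hl => by simp only [hf x hx l hl]; ring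
  obtain ⟨st, hst, hsth, hste⟩ := exists_homog_borel hU (f := fun k x => a k * g k x)
    (fun k => contDiffOn_const.mul (hg k)) (fun k => hcm _ _ _ (hh k))
  obtain ⟨lt, hlt, hlth, hlte⟩ := exists_homog_borel hU (f := fun k x => b k * g (m + k) x)
    (fun k => contDiffOn_const.mul (hg _)) (fun k => hcm _ _ _ (hh' k))
  refine ⟨st, lt, hst, hlt, fun x hx => hsth.euler_eq hx
    ((hst.contDiffAt (hU.1.mem_nhds hx)).differentiableAt (by simp)), fun x hx => hlth.euler_eq hx
    ((hlt.contDiffAt (hU.1.mem_nhds hx)).differentiableAt (by simp)), ?_, ?_, ?_⟩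
  · rintro y ⟨⟨-, hQ⟩, hy⟩
    obtain ⟨h, -, he⟩ := hste y hy hQ 1
    rw [he.eq_of_nhds]
    simp [hQ, ha0, g]
  · rintro y ⟨⟨-, hQ⟩, hy⟩ k
    obtain ⟨h, hsm, he⟩ := hlte y hy hQ (k + 1 + 2)
    obtain ⟨ρ, hρ, he'⟩ := laplt_expansion (γ := fun _ => 0) hU.1 (fun k => hg (m + k)) hh'
      (fun k => hlap (m + k)) (fun k => by have := hb k; rw [hw]; linear_combination this) hy (k + 1) hsm he
    refine InQIdeal.iteratedFDeriv_eq_zero hQ k (hρ.congr (he'.trans ?_))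
    exact Eventually.of_forall fun x => by simp
  · rintro y ⟨⟨-, hQ⟩, hy⟩ k
    -- Expand `s̃` to an order higher by `m` than `l̃`, to match the factor `Q^(m-1)`.
    obtain ⟨h1, hsm1, he1⟩ := hlte y hy hQ (k + 1 + 1)
    obtain ⟨h2, hsm2, he2⟩ := hste y hy hQ (m - 1 + (k + 1) + 2)
    obtain ⟨ρ, hρ, he'⟩ := laplt_expansion (d := w)
      (γ := fun k => if m ≤ k + 1 then 4 * m * b (k + 1 - m) else 0) hU.1 hg hh hlap
      (fun k => by have := ha k; rw [hw]; linear_combination this) hy (m - 1 + (k + 1)) hsm2 he2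
    have hR : InQIdeal y (m - 1 + (k + 1 + 1))
        (fun x => 4 * (m : ℝ) * (QForm p q x ^ (m - 1 + (k + 1 + 1)) * h1 x)) :=
      ⟨fun x => 4 * (m : ℝ) * h1 x, contDiffAt_const.mul hsm1,
        Eventually.of_forall fun x => by simp only [smul_eq_mul]; ring⟩
    refine InQIdeal.iteratedFDeriv_eq_zero hQ k
      (((hρ.mono (by omega)).add (hR.mono (by omega))).congr ?_)
    filter_upwards [he1, he'] with x hx1 hx2
    -- the terms with `i < m - 1` vanish, and the others cancel against the expansion of `l̃`
    rw [hx1, hx2, add_assoc (m - 1), Finset.sum_range_add,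
      Finset.sum_eq_zero (s := Finset.range (m - 1)) fun i hi => by
        rw [if_neg (by have := Finset.mem_range.1 hi; omega), zero_mul]]
    have : ∀ i, (if m ≤ m - 1 + i + 1 then 4 * (m : ℝ) * b (m - 1 + i + 1 - m) else 0) *
        (QForm p q x ^ (m - 1 + i) * g (m - 1 + i + 1) x) =
        4 * (m : ℝ) * QForm p q x ^ (m - 1) * (QForm p q x ^ i * (b i * g (m + i) x)) := by
      intro i
      rw [if_pos (by omega), show m - 1 + i + 1 - m = i by omega,
        show m - 1 + i + 1 = m + i by omega, pow_add]
      ring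
    simp only [this, ← Finset.mul_sum]
    rw [pow_add _ (m - 1)]
    ring
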